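/- In every C_k-algebra (A, t), for all a, b ∈ A one has (a ⇁ b) ⇁ a = a; consequently ((a ⇁ b) ⇁ a) ⇁ a = 1. -/

import Mathlib

universe u

/-- Modal pseudocomplemented De Morgan algebra (mpM-algebra). -/
class MpM (A : Type u) extends DistribLattice A, BoundedOrder A where
  dm : A → A   -- De Morgan negation ∼
  ps : A → A   -- pseudocomplement *
  dm_dm : ∀ x : A, dm (dm x) = x
  dm_sup : ∀ x y : A, dm (x ⊔ y) = dm x ⊓ dm y
  pseudo : ∀ a x : A, a ⊓ x = ⊥ ↔ x ≤ ps a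
  modal : ∀ x : A, x ⊔ dm x ≤ x ⊔ ps x

open MpM

variable {A : Type u} [MpM A]

/-- ∇x = ∼(∼x ∧ x*) -/
def nabla (x : A) : A := dm (dm x ⊓ ps x)

/-- △x = ∼∇∼x -/
def tri (x : A) : A := dm (nabla (dm x))

/-- A C_k-algebra structure on an mpM-algebra `A`: an automorphism `t` with `t^k = id`. -/
structure CkStr (A : Type u) [MpM A] (k : ℕ) where
  t : A → A
  bij : Function.Bijective t
  map_inf : ∀ x y : A, t (x ⊓ y) = t x ⊓ t y
  map_sup : ∀ x y : A, t (x ⊔ y) = t x ⊔ t y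
  map_dm : ∀ x : A, t (dm x) = dm (t x)
  map_ps : ∀ x : A, t (ps x) = ps (t x)
  map_bot : t (⊥ : A) = ⊥
  map_top : t (⊤ : A) = ⊤
  periodic : ∀ x : A, t^[k] x = x

/-- Lattice filter: nonempty, upward closed, closed under binary meets. -/
def IsLatFilter (F : Set A) : Prop :=
  F.Nonempty ∧ (∀ x ∈ F, ∀ y : A, x ≤ y → y ∈ F) ∧ ∀ x ∈ F, ∀ y ∈ F, x ⊓ y ∈ F

/-- c-filter: a filter closed under △ and t. -/
def IsCFilter {k : ℕ} (T : CkStr A k) (F : Set A) : Prop :=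
  IsLatFilter F ∧ ∀ x ∈ F, tri x ∈ F ∧ T.t x ∈ F

/-- maximal c-filter: proper and not properly contained in a proper c-filter. -/
def IsMaxCFilter {k : ℕ} (T : CkStr A k) (N : Set A) : Prop :=
  IsCFilter T N ∧ N ≠ Set.univ ∧
    ∀ G : Set A, IsCFilter T G → G ≠ Set.univ → N ⊆ G → N = G

/-- prime filter -/
def IsPrimeFilter (P : Set A) : Prop :=
  IsLatFilter P ∧ P ≠ Set.univ ∧ ∀ x y : A, x ⊔ y ∈ P → x ∈ P ∨ y ∈ P

/-- ultrafilter: maximal proper (lattice) filter -/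
def IsUltraFilter (U : Set A) : Prop :=
  IsLatFilter U ∧ U ≠ Set.univ ∧
    ∀ G : Set A, IsLatFilter G → G ≠ Set.univ → U ⊆ G → U = G

/-- Birula–Rasiowa transformation φ(P) = A \ {∼x : x ∈ P}. -/
def brPhi (P : Set A) : Set A := Set.univ \ (dm '' P)

/-- a ⇁ b = (⋁_{i=1}^{k} ∇(∼ t^i(a))) ∨ b -/
def rimp {k : ℕ} (T : CkStr A k) (a b : A) : A :=
  ((Finset.Icc 1 k).sup fun i => nabla (dm (T.t^[i] a))) ⊔ b

/-- cyclic deductive system -/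
def IsCDS {k : ℕ} (T : CkStr A k) (D : Set A) : Prop :=
  (⊤ : A) ∈ D ∧ ∀ x ∈ D, ∀ y : A, rimp T x y ∈ D → y ∈ D

/-- maximal cyclic deductive system -/
def IsMaxCDS {k : ℕ} (T : CkStr A k) (M : Set A) : Prop :=
  IsCDS T M ∧ M ≠ Set.univ ∧
    ∀ G : Set A, IsCDS T G → G ≠ Set.univ → M ⊆ G → M = G

/-- the smallest cyclic deductive system containing `X` -/
def genCDS {k : ℕ} (T : CkStr A k) (X : Set A) : Set A :=
  ⋂₀ {D : Set A | IsCDS T D ∧ X ⊆ D}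

/-- K(A) = {x : t(x) = x and ∇x = x} -/
def Kset {k : ℕ} (T : CkStr A k) : Set A := {x : A | T.t x = x ∧ nabla x = x}

/-- consistency operator ∘x = ⋀_{i=0}^{k} t^i((∼x ∨ x) ∧ (x ∧ ∼x)*) -/
def cCirc {k : ℕ} (T : CkStr A k) (x : A) : A :=
  (Finset.Icc 0 k).inf fun i => T.t^[i] ((dm x ⊔ x) ⊓ ps (x ⊓ dm x))

/-- x → y = ∼((∼(x∨y))* ∧ (x∨y)) ∨ ((∼(x∧y))* ∧ (x∧y)) -/
def mpTo (x y : A) : A :=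
  dm (ps (dm (x ⊔ y)) ⊓ (x ⊔ y)) ⊔ (ps (dm (x ⊓ y)) ⊓ (x ⊓ y))

/-- x ⇒ y = (x → y) ∧ (∼y → ∼x) -/
def mpIff (x y : A) : A := mpTo x y ⊓ mpTo (dm y) (dm x)

/-! For a De Morgan algebra with pseudocomplement, `∇∼x ≤ y` says `∼x ≤ y` and `x ⊔ y = ⊤`, which is
symmetric in `x` and `y`. So `c x = ∇∼x` satisfies excluded middle, and `c x ≤ y` implies `c y ≤ x`.
Since `t` commutes with `c` and `t^k = id`, every `t^j (a ⇁ b)` lies above `c a`. By the symmetry,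
`c (t^j (a ⇁ b)) ≤ a` for all `j`, which is the first identity; `j = 0` and `b = a` give
`a ⇁ a = ⊤`. -/

section CyclicImp

open Function

/-- A dual negation: a unary operation with excluded middle that is adjoint to itself, the
order dual of a negation satisfying `x ⊓ ¬x = ⊥` and `x ≤ ¬y → y ≤ ¬x`. It abstracts `x ↦ ∇∼x`. -/
structure IsDualNegation {L : Type*} [SemilatticeSup L] [OrderTop L] (c : L → L) : Prop where
  le_of_le : ∀ {x y : L}, c x ≤ y → c y ≤ x
  sup_eq_top : ∀ x : L, x ⊔ c x = ⊤

/-- The implication `(⋁_{i=1}^{k} c (t^i a)) ∨ b` of a unary operation `c` and a map `t`, of which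
`rimp` is the case `c x = ∇∼x`. -/
def cyclicImp {L : Type*} [SemilatticeSup L] [OrderBot L] (c t : L → L) (k : ℕ) (a b : L) : L :=
  ((Finset.Icc 1 k).sup fun i => c (t^[i] a)) ⊔ b

theorem exists_mem_Icc_isFixedPt_iterate_add {α : Type*} {f : α → α} {k : ℕ} {x : α} (hk : 0 < k)
    (hx : IsPeriodicPt f k x) (j : ℕ) : ∃ i ∈ Finset.Icc 1 k, IsFixedPt f^[j + i] x := by
  have hlt : j % k < k := Nat.mod_lt j hk
  refine ⟨k - j % k, Finset.mem_Icc.2 (by omega), hx.trans_dvd ⟨j / k + 1, ?_⟩⟩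
  have hdiv : k * (j / k) + j % k = j := Nat.div_add_mod j k
  rw [mul_add_one]
  omega

variable {L : Type*} [SemilatticeSup L] {c t : L → L} {k : ℕ}

theorem le_iterate_cyclicImp [OrderBot L] (ht : Monotone t) (htc : Function.Commute t c)
    (htk : ∀ x, IsPeriodicPt t k x) (hk : 0 < k) (a b : L) (j : ℕ) :
    c a ≤ t^[j] (cyclicImp c t k a b) := by
  obtain ⟨i, hi, hfix⟩ := exists_mem_Icc_isFixedPt_iterate_add hk (htk a) j
  have hle : c (t^[i] a) ≤ cyclicImp c t k a b :=
    le_sup_of_le_left (Finset.le_sup (f := fun i => c (t^[i] a)) hi)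
  calc
    c a = c (t^[j] (t^[i] a)) := by rw [← iterate_add_apply, hfix.eq]
    _ = t^[j] (c (t^[i] a)) := ((htc.iterate_left j).eq _).symm
    _ ≤ t^[j] (cyclicImp c t k a b) := ht.iterate j hle

variable [BoundedOrder L]

theorem cyclicImp_cyclicImp_self (hc : IsDualNegation c) (ht : Monotone t)
    (htc : Function.Commute t c) (htk : ∀ x, IsPeriodicPt t k x) (a b : L) :
    cyclicImp c t k (cyclicImp c t k a b) a = a := by
  refine sup_eq_right.2 (Finset.sup_le fun j hj => ?_)
  obtain ⟨one_le_j, j_le_k⟩ := Finset.mem_Icc.1 hj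
  exact hc.le_of_le (le_iterate_cyclicImp ht htc htk (one_le_j.trans j_le_k) a b j)

theorem cyclicImp_self (hc : IsDualNegation c) (ht : Monotone t) (htc : Function.Commute t c)
    (htk : ∀ x, IsPeriodicPt t k x) (hk : 0 < k) (a : L) : cyclicImp c t k a a = ⊤ :=
  top_unique <| (hc.sup_eq_top a).ge.trans <|
    sup_le le_sup_right (le_iterate_cyclicImp ht htc htk hk a a 0)

theorem stmt6_general (hc : IsDualNegation c) (ht : Monotone t) (htc : Function.Commute t c)
    (htk : ∀ x, IsPeriodicPt t k x) (hk : 0 < k) (a b : L) :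
    cyclicImp c t k (cyclicImp c t k a b) a = a ∧
      cyclicImp c t k (cyclicImp c t k (cyclicImp c t k a b) a) a = ⊤ := by
  have peirce : cyclicImp c t k (cyclicImp c t k a b) a = a :=
    cyclicImp_cyclicImp_self hc ht htc htk a b
  exact ⟨peirce, by rw [peirce, cyclicImp_self hc ht htc htk hk]⟩

end CyclicImp

namespace MpM

theorem dm_antitone : Antitone (dm : A → A) := fun x y hxy => by
  rw [← sup_eq_right.2 hxy, dm_sup]
  exact inf_le_left

theorem dm_le_comm {x y : A} : dm x ≤ y ↔ dm y ≤ x :=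
  ⟨fun h => dm_dm x ▸ dm_antitone h, fun h => dm_dm y ▸ dm_antitone h⟩

theorem dm_eq_bot_iff {x : A} : dm x = ⊥ ↔ x = ⊤ := by
  have dm_bot : dm (⊥ : A) = ⊤ := top_unique (dm_dm (⊤ : A) ▸ dm_antitone bot_le)
  rw [← le_bot_iff, dm_le_comm, dm_bot, top_le_iff]

theorem nabla_dm_le_iff {x y : A} : nabla (dm x) ≤ y ↔ dm x ≤ y ∧ x ⊔ y = ⊤ := by
  rw [nabla, dm_le_comm, dm_dm, le_inf_iff, dm_le_comm, ← pseudo, ← dm_sup, dm_eq_bot_iff]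

theorem isDualNegation_nabla_dm : IsDualNegation fun x : A => nabla (dm x) where
  le_of_le {x y} h := by
    rwa [nabla_dm_le_iff, dm_le_comm, sup_comm, ← nabla_dm_le_iff]
  sup_eq_top _ := (nabla_dm_le_iff.1 le_rfl).2

end MpM

namespace CkStr

variable {k : ℕ} (T : CkStr A k)

theorem monotone : Monotone T.t := fun x y hxy => by
  rw [← sup_eq_right.2 hxy, T.map_sup]
  exact le_sup_left

theorem commute_nabla_dm : Function.Commute T.t fun x => nabla (dm x) := fun x => by
  simp only [nabla, T.map_dm, T.map_inf, T.map_ps]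

end CkStr

theorem stmt6 {k : ℕ} (hk : 0 < k) (T : CkStr A k) (a b : A) :
    rimp T (rimp T a b) a = a ∧ rimp T (rimp T (rimp T a b) a) a = ⊤ :=
  stmt6_general isDualNegation_nabla_dm T.monotone T.commute_nabla_dm T.periodic hk a b
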